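/- arXiv:math/0409553 — 2 statements merged into one kernel-verified Lean document; each statement's English description precedes it below -/
import Mathlib

section
/- Let E be a finite-dimensional real inner product space, U ⊆ E a nonempty open set, p ≥ 1 an integer, and φ : U → ℂⁿ a C² map. Then φ is a pseudo harmonic morphism if and only if for every open set V ⊆ ℂⁿ and every holomorphic map ψ : V → ℂᵖ, the composition ψ∘φ : φ⁻¹(V) → ℂᵖ is a pseudo harmonic morphism. -/
/-!
Let `∂ᵢφ` be the derivatives of `φ` along an orthonormal basis of `E`. For `ψ` holomorphic, the
chain rule reads `Δ(ψ ∘ φ) = ∑ᵢ D²ψ(∂ᵢφ, ∂ᵢφ) + Dψ(Δφ)` with `D²ψ` complex bilinear, while `φ` is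
pseudo-horizontally weakly conformal (PHWC) at a point exactly when `∑ᵢ L(∂ᵢφ, ∂ᵢφ) = 0` for every
complex bilinear form `L`. If `φ` is harmonic and PHWC, both terms of the chain rule vanish, and
`ψ ∘ φ` inherits PHWC because a bilinear form pulls back along `Dψ` to a bilinear form.
Conversely, testing on coordinates gives `Δφ = 0`, and testing on quadratic forms `z ↦ L(z, z)`
then gives `2 ∑ᵢ L(∂ᵢφ, ∂ᵢφ) = 0`.

The chain rule needs a holomorphic map of several variables to be `C²`. The Schwarz lemma bounds
`Dg` by the size of `g`; hence a locally uniform limit of holomorphic maps is holomorphic, and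
the directional derivatives of `g` are such limits, namely of its difference quotients.
-/

open scoped RealInnerProductSpace

/-- The Laplacian of a real-valued function on an inner product space:
the trace of the derivative of the gradient (i.e. of the second derivative). -/
noncomputable def lap {E : Type*} [NormedAddCommGroup E] [InnerProductSpace ℝ E]
    [CompleteSpace E] (f : E → ℝ) (x : E) : ℝ :=
  LinearMap.trace ℝ E (fderiv ℝ (gradient f) x : E →ₗ[ℝ] E)

/-- A real-valued function is harmonic on an open set `W` if it is `C²` there and its
Laplacian vanishes identically on `W`. -/
def HarmonicOn {E : Type*} [NormedAddCommGroup E] [InnerProductSpace ℝ E]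
    [CompleteSpace E] (f : E → ℝ) (W : Set E) : Prop :=
  ContDiffOn ℝ 2 f W ∧ ∀ x ∈ W, lap f x = 0

/-- Pseudo-horizontally weakly conformal map into `ℂⁿ`, on a set `U`. -/
def PHWCOn {E : Type*} [NormedAddCommGroup E] [InnerProductSpace ℝ E] [CompleteSpace E]
    {n : ℕ} (φ : E → (Fin n → ℂ)) (U : Set E) : Prop :=
  ∀ A B : Fin n, ∀ x ∈ U,
    ⟪gradient (fun y => (φ y A).re) x, gradient (fun y => (φ y B).re) x⟫ -
      ⟪gradient (fun y => (φ y A).im) x, gradient (fun y => (φ y B).im) x⟫ = 0 ∧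
    ⟪gradient (fun y => (φ y A).im) x, gradient (fun y => (φ y B).re) x⟫ +
      ⟪gradient (fun y => (φ y A).re) x, gradient (fun y => (φ y B).im) x⟫ = 0

/-- Pseudo harmonic morphism into `ℂⁿ` on a set `U`: a `C²` map which is harmonic
(the real and imaginary parts of each component are harmonic) and
pseudo-horizontally weakly conformal. -/
def PHMOn {E : Type*} [NormedAddCommGroup E] [InnerProductSpace ℝ E] [CompleteSpace E]
    {n : ℕ} (φ : E → (Fin n → ℂ)) (U : Set E) : Prop :=
  ContDiffOn ℝ 2 φ U ∧
  (∀ k : Fin n, HarmonicOn (fun y => (φ y k).re) U ∧ HarmonicOn (fun y => (φ y k).im) U) ∧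
  PHWCOn φ U

open Filter InnerProductSpace Metric Topology
open scoped Laplacian

section HolomorphicMaps

variable {F G : Type*} [NormedAddCommGroup F] [NormedSpace ℂ F] [NormedAddCommGroup G]
  [NormedSpace ℂ G]

lemma norm_fderiv_le_of_differentiableOn_ball {f : F → G} {z : F} {r C : ℝ} (hr : 0 < r)
    (hf : DifferentiableOn ℂ f (ball z r)) (hC : ∀ w ∈ ball z r, ‖f w‖ ≤ C) :
    ‖fderiv ℂ f z‖ ≤ 2 * C / r := by
  refine Complex.norm_fderiv_le_div_of_mapsTo_ball hf (fun w hw => ?_) hr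
  rw [mem_closedBall_iff_norm, two_mul]
  exact norm_sub_le_of_le (hC w hw) (hC z (mem_ball_self hr))

lemma ball_subset_ball_two_mul {X : Type*} [PseudoMetricSpace X] {x y : X} {r : ℝ}
    (hy : y ∈ ball x r) : ball y r ⊆ ball x (2 * r) :=
  ball_subset_ball' (by linarith [mem_ball.1 hy])

lemma norm_sub_le_of_differentiableOn_ball {f : F → G} {z₀ : F} {r C : ℝ} (hr : 0 < r)
    (hf : DifferentiableOn ℂ f (ball z₀ (2 * r))) (hC : ∀ w ∈ ball z₀ (2 * r), ‖f w‖ ≤ C)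
    {z w : F} (hz : z ∈ ball z₀ r) (hw : w ∈ ball z₀ r) :
    ‖f w - f z‖ ≤ 2 * C / r * ‖w - z‖ := by
  let : NormedSpace ℝ F := .restrictScalars ℝ ℂ F
  refine (convex_ball z₀ r).norm_image_sub_le_of_norm_fderiv_le (𝕜 := ℂ)
    (fun y hy => ?_) (fun y hy => ?_) hz hw
  · exact (hf.mono (ball_subset_ball_two_mul hy)).differentiableAt (ball_mem_nhds y hr)
  · exact norm_fderiv_le_of_differentiableOn_ball hr (hf.mono (ball_subset_ball_two_mul hy))
      fun v hv => hC v (ball_subset_ball_two_mul hy hv)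

lemma norm_fderiv_sub_le_of_differentiableOn_ball {f : F → G} {z₀ : F} {r C : ℝ} (hr : 0 < r)
    (hf : DifferentiableOn ℂ f (ball z₀ (4 * r))) (hC : ∀ w ∈ ball z₀ (4 * r), ‖f w‖ ≤ C)
    {z w : F} (hz : z ∈ ball z₀ r) (hw : w ∈ ball z₀ r) :
    ‖fderiv ℂ f w - fderiv ℂ f z‖ ≤ 2 * C / r ^ 2 * ‖w - z‖ := by
  have hmem : ∀ y ∈ ball z r, y ∈ ball z₀ (2 * r) ∧ y + (w - z) ∈ ball z₀ (2 * r) := fun y hy =>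
    ⟨ball_subset_ball_two_mul hz hy, ball_subset_ball_two_mul hw <| by
      rwa [mem_ball_iff_norm, show y + (w - z) - w = y - z by abel, ← mem_ball_iff_norm]⟩
  have hfd : ∀ y ∈ ball z₀ (2 * r), DifferentiableAt ℂ f y := fun y hy =>
    hf.differentiableAt (isOpen_ball.mem_nhds (ball_subset_ball (by linarith) hy))
  have hshift : ∀ y ∈ ball z r, DifferentiableAt ℂ (fun y => f (y + (w - z))) y := fun y hy =>
    (hfd _ (hmem y hy).2).comp y (by fun_prop)
  have hbound : ∀ y ∈ ball z r, ‖f (y + (w - z)) - f y‖ ≤ C / r * ‖w - z‖ := fun y hy => by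
    have hle := norm_sub_le_of_differentiableOn_ball (C := C) (r := 2 * r) (z₀ := z₀)
      (by positivity) (hf.mono (ball_subset_ball (by linarith)))
      (fun v hv => hC v (ball_subset_ball (by linarith) hv)) (hmem y hy).1 (hmem y hy).2
    rwa [add_sub_cancel_left, mul_div_mul_left _ _ two_ne_zero] at hle
  have hzr : z ∈ ball z r := mem_ball_self hr
  calc ‖fderiv ℂ f w - fderiv ℂ f z‖ = ‖fderiv ℂ (fun y => f (y + (w - z)) - f y) z‖ := by
        rw [fderiv_fun_sub (hshift z hzr) (hfd z (hmem z hzr).1), fderiv_comp_add_right,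
          add_sub_cancel]
    _ ≤ 2 * (C / r * ‖w - z‖) / r := norm_fderiv_le_of_differentiableOn_ball hr
        (fun y hy => ((hshift y hy).sub (hfd y (hmem y hy).1)).differentiableWithinAt) hbound
    _ = 2 * C / r ^ 2 * ‖w - z‖ := by ring

lemma norm_sub_sub_fderiv_le_of_differentiableOn_ball {f : F → G} {z₀ : F} {r C : ℝ} (hr : 0 < r)
    (hf : DifferentiableOn ℂ f (ball z₀ (4 * r))) (hC : ∀ w ∈ ball z₀ (4 * r), ‖f w‖ ≤ C)
    {z w : F} (hz : z ∈ ball z₀ r) (hw : w ∈ ball z₀ r) :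
    ‖f w - f z - fderiv ℂ f z (w - z)‖ ≤ 2 * C / r ^ 2 * ‖w - z‖ ^ 2 := by
  let : NormedSpace ℝ F := .restrictScalars ℝ ℂ F
  have hC0 : 0 ≤ C := (norm_nonneg _).trans (hC z₀ (mem_ball_self (by positivity)))
  have hseg : segment ℝ z w ⊆ ball z₀ r := (convex_ball z₀ r).segment_subset hz hw
  calc ‖f w - f z - fderiv ℂ f z (w - z)‖ ≤ 2 * C / r ^ 2 * ‖w - z‖ * ‖w - z‖ := by
        refine (convex_segment z w).norm_image_sub_le_of_norm_fderiv_le' (𝕜 := ℂ)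
          (fun y hy => ?_) (fun y hy => ?_) (left_mem_segment ℝ z w) (right_mem_segment ℝ z w)
        · exact hf.differentiableAt
            (isOpen_ball.mem_nhds (ball_subset_ball (by linarith) (hseg hy)))
        · exact (norm_fderiv_sub_le_of_differentiableOn_ball hr hf hC hz (hseg hy)).trans
            (by gcongr; exact norm_sub_le_of_mem_segment hy)
    _ = 2 * C / r ^ 2 * ‖w - z‖ ^ 2 := by ring

lemma uniformCauchySeqOn_fderiv {ι : Type*} {l : Filter ι} {f : ι → F → G} {z₀ : F} {r : ℝ}
    (hf : ∀ᶠ i in l, DifferentiableOn ℂ (f i) (ball z₀ (2 * r)))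
    (hcauchy : UniformCauchySeqOn f l (ball z₀ (2 * r))) :
    UniformCauchySeqOn (fun i => fderiv ℂ (f i)) l (ball z₀ r) := by
  rcases le_or_gt r 0 with hr | hr
  · rw [ball_eq_empty.2 hr]
    exact fun u _ => .of_forall (by simp)
  intro u hu
  obtain ⟨ε, hε, hεu⟩ := mem_uniformity_dist.1 hu
  filter_upwards [hcauchy _ (dist_mem_uniformity (show 0 < ε * r / 4 by positivity)),
    hf.prod_mk hf] with ⟨i, j⟩ hij ⟨hi, hj⟩ z hz
  have hsub := ball_subset_ball_two_mul hz
  have hnhds := (isOpen_ball.mem_nhds (hsub (mem_ball_self hr)))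
  refine hεu ?_
  rw [dist_eq_norm, ← fderiv_fun_sub (hi.differentiableAt hnhds) (hj.differentiableAt hnhds)]
  calc ‖fderiv ℂ (fun z => f i z - f j z) z‖ ≤ 2 * (ε * r / 4) / r :=
        norm_fderiv_le_of_differentiableOn_ball hr ((hi.sub hj).mono hsub) fun w hw => by
          simpa [dist_eq_norm] using (hij w (hsub hw)).le
    _ = ε / 2 := by field_simp; norm_num
    _ < ε := half_lt_self hε

lemma differentiableAt_of_tendstoUniformlyOn [CompleteSpace G] {ι : Type*} {l : Filter ι}
    [l.NeBot] {f : ι → F → G} {g : F → G} {z₀ : F} {V : Set F} (hV : V ∈ 𝓝 z₀)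
    (hf : ∀ᶠ i in l, DifferentiableOn ℂ (f i) V) (hfg : TendstoUniformlyOn f g l V) :
    DifferentiableAt ℂ g z₀ := by
  obtain ⟨R, hR, hRV⟩ := Metric.mem_nhds_iff.1 hV
  obtain ⟨r, hr, rfl⟩ : ∃ r : ℝ, 0 < r ∧ R = 2 * r := ⟨R / 2, by positivity, by ring⟩
  have hcauchy : UniformCauchySeqOn (fun i => fderiv ℂ (f i)) l (ball z₀ r) :=
    uniformCauchySeqOn_fderiv (hf.mono fun i hi => hi.mono hRV)
      (hfg.uniformCauchySeqOn.mono hRV)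
  have hlim : ∀ z ∈ ball z₀ r, Tendsto (fun i => fderiv ℂ (f i) z) l
      (𝓝 (lim (map (fun i => fderiv ℂ (f i) z) l))) := fun z hz =>
    le_nhds_lim (CompleteSpace.complete (hcauchy.cauchy_map hz))
  have hderiv : TendstoUniformlyOnFilter (fun i => fderiv ℂ (f i))
      (fun z => lim (map (fun i => fderiv ℂ (f i) z) l)) l (𝓝 z₀) :=
    (hcauchy.tendstoUniformlyOn_of_tendsto hlim).tendstoUniformlyOnFilter.mono_right
      (le_principal_iff.2 (ball_mem_nhds z₀ hr))
  refine (hasFDerivAt_of_tendstoUniformlyOnFilter (f := f) hderiv ?_ ?_).differentiableAt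
  · filter_upwards [hf.prod_mk (isOpen_ball.mem_nhds (mem_ball_self (x := z₀) hR))]
      with ⟨i, z⟩ ⟨hi, hz⟩
    exact (hi.differentiableAt (mem_of_superset (isOpen_ball.mem_nhds hz) hRV)).hasFDerivAt
  · filter_upwards [hV] with z hz using hfg.tendsto_at hz

lemma differentiableAt_fderiv_apply [CompleteSpace G] {g : F → G} {z₀ : F}
    (hg : ∀ᶠ z in 𝓝 z₀, DifferentiableAt ℂ g z) (v : F) :
    DifferentiableAt ℂ (fun z => fderiv ℂ g z v) z₀ := by
  obtain ⟨R, hR, hgR⟩ := Metric.eventually_nhds_iff_ball.1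
    (hg.and (hg.self_of_nhds.continuousAt.norm.eventually_lt_const (lt_add_one ‖g z₀‖)))
  obtain ⟨r, hr, rfl⟩ : ∃ r : ℝ, 0 < r ∧ R = 4 * (2 * r) := ⟨R / 8, by positivity, by ring⟩
  set K := 2 * (‖g z₀‖ + 1) / (2 * r) ^ 2
  have hsmall : Tendsto (fun t : ℂ => ‖t • v‖) (𝓝[≠] 0) (𝓝 0) := by
    refine tendsto_nhdsWithin_of_tendsto_nhds ?_
    exact Continuous.tendsto' (by fun_prop) _ _ (by simp)
  have hmem : ∀ᶠ t : ℂ in 𝓝[≠] 0, ∀ z ∈ ball z₀ r, z + t • v ∈ ball z₀ (2 * r) := by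
    filter_upwards [hsmall.eventually_lt_const hr] with t ht z hz
    exact ball_subset_ball_two_mul hz (by simpa using ht)
  refine differentiableAt_of_tendstoUniformlyOn (l := 𝓝[≠] (0 : ℂ))
    (f := fun t z => t⁻¹ • (g (z + t • v) - g z)) (ball_mem_nhds z₀ hr) ?_ ?_
  · filter_upwards [hmem] with t ht z hz
    have h1 := (hgR (z + t • v) (ball_subset_ball (by linarith) (ht z hz))).1
    have h2 := (hgR z (ball_subset_ball (by linarith) hz)).1
    exact (((h1.comp z (by fun_prop)).sub h2).const_smul _).differentiableWithinAt
  · refine Metric.tendstoUniformlyOn_iff.2 fun ε hε => ?_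
    have hK : Tendsto (fun t : ℂ => K * ‖t • v‖ * ‖v‖) (𝓝[≠] 0) (𝓝 0) := by
      simpa using (hsmall.const_mul K).mul_const ‖v‖
    filter_upwards [hmem, hK.eventually_lt_const hε, self_mem_nhdsWithin] with t ht htε ht0 z hz
    have htaylor := norm_sub_sub_fderiv_le_of_differentiableOn_ball (by positivity)
      (fun y hy => (hgR y hy).1.differentiableWithinAt) (fun y hy => (hgR y hy).2.le)
      (ball_subset_ball (by linarith) hz) (ht z hz)
    rw [add_sub_cancel_left, map_smul] at htaylor
    have ht0 : t ≠ 0 := ht0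
    rw [dist_comm, dist_eq_norm]
    calc ‖t⁻¹ • (g (z + t • v) - g z) - fderiv ℂ g z v‖
        = ‖t‖⁻¹ * ‖g (z + t • v) - g z - t • fderiv ℂ g z v‖ := by
          rw [← norm_inv, ← norm_smul, smul_sub t⁻¹ _ (t • _), inv_smul_smul₀ ht0]
      _ ≤ ‖t‖⁻¹ * (K * ‖t • v‖ ^ 2) := by gcongr
      _ = K * ‖t • v‖ * ‖v‖ := by
          rw [norm_smul]
          field_simp [norm_ne_zero_iff.2 ht0]
      _ < ε := htε

theorem contDiffOn_of_differentiableOn_complex [FiniteDimensional ℂ F] [CompleteSpace G] {V : Set F}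
    (hV : IsOpen V) (n : ℕ) {g : F → G} (hg : DifferentiableOn ℂ g V) :
    ContDiffOn ℂ n g V := by
  induction n generalizing g with
  | zero => exact contDiffOn_zero.2 hg.continuousOn
  | succ n ih =>
    refine (contDiffOn_succ_iff_fderiv_of_isOpen hV).2
      ⟨hg, by simp, contDiffOn_clm_apply.2 fun v => ih fun z hz => ?_⟩
    exact (differentiableAt_fderiv_apply (hg.eventually_differentiableAt (hV.mem_nhds hz))
      v).differentiableWithinAt

end HolomorphicMaps

section SecondDerivative

variable {𝕜 F G : Type*} [NontriviallyNormedField 𝕜] [NormedAddCommGroup F] [NormedSpace 𝕜 F]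
  [NormedAddCommGroup G] [NormedSpace 𝕜 G]

lemma differentiableAt_fderiv_of_contDiffAt_two {f : F → G} {x : F} (hf : ContDiffAt 𝕜 2 f x) :
    DifferentiableAt 𝕜 (fderiv 𝕜 f) x :=
  (hf.fderiv_right (m := 1) one_add_one_eq_two.le).differentiableAt one_ne_zero

lemma fderiv_fderiv_bilin_self (L : F →L[𝕜] F →L[𝕜] G) (z : F) :
    fderiv 𝕜 (fderiv 𝕜 fun y => L y y) z = L + L.flip := by
  have hfderiv : (fderiv 𝕜 fun y => L y y) = ⇑(L + L.flip) := by
    ext1 y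
    simpa using fderiv_clm_apply L.differentiableAt (differentiableAt_id (x := y))
  rw [hfderiv, (L + L.flip).fderiv]

end SecondDerivative

section Laplacian

variable {E : Type*} [NormedAddCommGroup E] [InnerProductSpace ℝ E]

lemma gradient_eq_sum_fderiv [CompleteSpace E] {ι : Type*} [Fintype ι]
    (b : OrthonormalBasis ι ℝ E) (f : E → ℝ) :
    gradient f = fun y => ∑ i, fderiv ℝ f y (b i) • b i := by
  ext1 y
  rw [← b.sum_repr' (gradient f y)]
  simp only [real_inner_comm (gradient f y), inner_gradient_left]

lemma inner_gradient_gradient_eq_sum [CompleteSpace E] {ι : Type*} [Fintype ι]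
    (b : OrthonormalBasis ι ℝ E) (f g : E → ℝ) (x : E) :
    ⟪gradient f x, gradient g x⟫ = ∑ i, fderiv ℝ f x (b i) * fderiv ℝ g x (b i) := by
  rw [← b.sum_inner_mul_inner]
  simp only [real_inner_comm (gradient g x), inner_gradient_left]

variable [FiniteDimensional ℝ E]

lemma laplacian_eq_sum_fderiv_fderiv {F ι : Type*} [NormedAddCommGroup F] [NormedSpace ℝ F]
    [Fintype ι] (b : OrthonormalBasis ι ℝ E) (f : E → F) (x : E) :
    Δ f x = ∑ i, fderiv ℝ (fderiv ℝ f) x (b i) (b i) := by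
  simp only [laplacian_eq_iteratedFDeriv_orthonormalBasis f b, iteratedFDeriv_two_apply]
  rfl

lemma laplacian_apply {F κ : Type*} [NormedAddCommGroup F] [NormedSpace ℝ F] [Fintype κ]
    {φ : E → κ → F} {x : E} (hφ : ContDiffAt ℝ 2 φ x) (A : κ) :
    Δ φ x A = Δ (fun y => φ y A) x :=
  (hφ.laplacian_CLM_comp_left (l := ContinuousLinearMap.proj (φ := fun _ : κ => F) A)).symm

lemma lap_eq_laplacian {f : E → ℝ} {x : E} (hf : ContDiffAt ℝ 2 f x) : lap f x = Δ f x := by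
  let b := stdOrthonormalBasis ℝ E
  have hgrad : HasFDerivAt (gradient f)
      (∑ i, ((fderiv ℝ (fderiv ℝ f) x).flip (b i)).smulRight (b i)) x := by
    rw [gradient_eq_sum_fderiv b]
    refine .fun_sum fun i _ => HasFDerivAt.smul_const ?_ (b i)
    simpa using (differentiableAt_fderiv_of_contDiffAt_two hf).hasFDerivAt.clm_apply
      (hasFDerivAt_const (b i) x)
  rw [lap, hgrad.fderiv, laplacian_eq_sum_fderiv_fderiv b, ContinuousLinearMap.toLinearMap_sum,
    map_sum]
  exact Finset.sum_congr rfl fun i _ => LinearMap.trace_smulRight _ _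

lemma lap_clm_comp {F : Type*} [NormedAddCommGroup F] [NormedSpace ℝ F] (l : F →L[ℝ] ℝ)
    {f : E → F} {x : E} (hf : ContDiffAt ℝ 2 f x) :
    lap (fun y => l (f y)) x = l (Δ f x) :=
  (lap_eq_laplacian (l.contDiff.contDiffAt.comp x hf)).trans hf.laplacian_CLM_comp_left

lemma harmonicOn_re_and_harmonicOn_im_iff {f : E → ℂ} {W : Set E} (hW : IsOpen W)
    (hf : ContDiffOn ℝ 2 f W) :
    HarmonicOn (fun y => (f y).re) W ∧ HarmonicOn (fun y => (f y).im) W ↔ ∀ x ∈ W, Δ f x = 0 := by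
  have hlap (l : ℂ →L[ℝ] ℝ) : HarmonicOn (fun y => l (f y)) W ↔ ∀ x ∈ W, l (Δ f x) = 0 :=
    (and_iff_right (l.contDiff.comp_contDiffOn hf)).trans <|
      forall₂_congr fun x hx => by rw [lap_clm_comp l (hf.contDiffAt (hW.mem_nhds hx))]
  simp only [Complex.ext_iff, forall_and]
  exact and_congr (hlap Complex.reCLM) (hlap Complex.imCLM)

lemma laplacian_comp_eq_sum_add {𝕜 F G ι : Type*} [NontriviallyNormedField 𝕜] [NormedAlgebra ℝ 𝕜]
    [NormedAddCommGroup F] [NormedSpace ℝ F] [NormedSpace 𝕜 F] [IsScalarTower ℝ 𝕜 F]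
    [NormedAddCommGroup G] [NormedSpace ℝ G] [NormedSpace 𝕜 G] [IsScalarTower ℝ 𝕜 G]
    [Fintype ι] (b : OrthonormalBasis ι ℝ E) {φ : E → F} {g : F → G} {x : E}
    (hg : ContDiffAt 𝕜 2 g (φ x)) (hφ : ContDiffAt ℝ 2 φ x) :
    Δ (fun y => g (φ y)) x =
      ∑ i, fderiv 𝕜 (fderiv 𝕜 g) (φ x) (fderiv ℝ φ x (b i)) (fderiv ℝ φ x (b i)) +
        fderiv 𝕜 g (φ x) (Δ φ x) := by
  have hfderiv : fderiv ℝ (fun y => g (φ y)) =ᶠ[𝓝 x]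
      fun y => ((fderiv 𝕜 g (φ y)).restrictScalars ℝ).comp (fderiv ℝ φ y) := by
    filter_upwards [hφ.continuousAt.eventually (hg.eventually (by simp)),
      hφ.eventually (by simp)] with y hgy hφy
    exact (((hgy.differentiableAt two_ne_zero).hasFDerivAt.restrictScalars ℝ).comp y
      (hφy.differentiableAt two_ne_zero).hasFDerivAt).fderiv
  have hDg : HasFDerivAt (fun y => (fderiv 𝕜 g (φ y)).restrictScalars ℝ)
      ((ContinuousLinearMap.restrictScalarsL 𝕜 F G ℝ ℝ).comp
        (((fderiv 𝕜 (fderiv 𝕜 g) (φ x)).restrictScalars ℝ).comp (fderiv ℝ φ x))) x :=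
    (ContinuousLinearMap.restrictScalarsL 𝕜 F G ℝ ℝ).hasFDerivAt.comp x
      (((differentiableAt_fderiv_of_contDiffAt_two hg).hasFDerivAt.restrictScalars ℝ).comp x
        (hφ.differentiableAt two_ne_zero).hasFDerivAt)
  have hD2 := hDg.clm_comp (differentiableAt_fderiv_of_contDiffAt_two hφ).hasFDerivAt
  rw [laplacian_eq_sum_fderiv_fderiv b, laplacian_eq_sum_fderiv_fderiv b, map_sum,
    ← Finset.sum_add_distrib, hfderiv.fderiv_eq, hD2.fderiv]
  exact Finset.sum_congr rfl fun i _ => add_comm _ _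

end Laplacian

section Conformality

variable {E : Type*} [NormedAddCommGroup E] [InnerProductSpace ℝ E] [FiniteDimensional ℝ E]
  {F G : Type*} [NormedAddCommGroup F] [NormedSpace ℂ F] [NormedAddCommGroup G] [NormedSpace ℂ G]

/-- Pseudo-horizontal weak conformality of `φ` at `x` for maps into a complex normed space, without
reference to coordinates: every complex bilinear form pulls back along `fderiv ℝ φ x` to a form of
trace zero. For targets `Fin n → ℂ` this agrees with `PHWCOn`, see `phwcOn_iff`. -/
def IsPHWCAt (φ : E → F) (x : E) : Prop :=
  ∀ L : F →L[ℂ] F →L[ℂ] ℂ, ∑ i, L (fderiv ℝ φ x (stdOrthonormalBasis ℝ E i))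
    (fderiv ℝ φ x (stdOrthonormalBasis ℝ E i)) = 0

lemma sum_bilin_self_eq_zero_iff {ι κ : Type*} [Fintype ι] [Finite κ] {w : ι → κ → ℂ} :
    (∀ L : (κ → ℂ) →L[ℂ] (κ → ℂ) →L[ℂ] ℂ, ∑ i, L (w i) (w i) = 0) ↔
      ∀ A B, ∑ i, w i A * w i B = 0 := by
  classical
  cases nonempty_fintype κ
  refine ⟨fun h A B => ?_, fun h L => ?_⟩
  · exact h ((ContinuousLinearMap.mul ℂ ℂ).bilinearComp (.proj A) (.proj B))
  · have hL (v : κ → ℂ) : L v v = ∑ A, ∑ B, v A * v B * L (Pi.single B 1) (Pi.single A 1) := by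
      conv_lhs => rw [pi_eq_sum_univ' v]
      simp [Finset.mul_sum, mul_assoc]
    calc ∑ i, L (w i) (w i)
        = ∑ A, ∑ B, (∑ i, w i A * w i B) * L (Pi.single B 1) (Pi.single A 1) := by
          simp_rw [hL, Finset.sum_mul]
          rw [Finset.sum_comm]
          exact Finset.sum_congr rfl fun A _ => Finset.sum_comm
      _ = 0 := by simp only [h, zero_mul, Finset.sum_const_zero]

lemma sum_fderiv_mul_fderiv_eq_zero_iff {f g : E → ℂ} {x : E} (hf : DifferentiableAt ℝ f x)
    (hg : DifferentiableAt ℝ g x) {ι : Type*} [Fintype ι] (b : OrthonormalBasis ι ℝ E) :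
    ∑ i, fderiv ℝ f x (b i) * fderiv ℝ g x (b i) = 0 ↔
      ⟪gradient (fun y => (f y).re) x, gradient (fun y => (g y).re) x⟫ -
        ⟪gradient (fun y => (f y).im) x, gradient (fun y => (g y).im) x⟫ = 0 ∧
      ⟪gradient (fun y => (f y).im) x, gradient (fun y => (g y).re) x⟫ +
        ⟪gradient (fun y => (f y).re) x, gradient (fun y => (g y).im) x⟫ = 0 := by
  have hfderiv (l : ℂ →L[ℝ] ℝ) {h : E → ℂ} (hh : DifferentiableAt ℝ h x) (e : E) :
      fderiv ℝ (fun y => l (h y)) x e = l (fderiv ℝ h x e) :=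
    DFunLike.congr_fun (l.hasFDerivAt.comp x hh.hasFDerivAt).fderiv e
  have hre := @hfderiv Complex.reCLM
  have him := @hfderiv Complex.imCLM
  simp only [Complex.reCLM_apply, Complex.imCLM_apply] at hre him
  simp only [Complex.ext_iff, inner_gradient_gradient_eq_sum b, hre hf, hre hg, him hf, him hg,
    Complex.re_sum, Complex.im_sum, Complex.mul_re, Complex.mul_im, Complex.zero_re,
    Complex.zero_im, ← Finset.sum_sub_distrib, ← Finset.sum_add_distrib, add_comm]

lemma isPHWCAt_pi_iff {κ : Type*} [Fintype κ] {φ : E → κ → ℂ} {x : E}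
    (hφ : DifferentiableAt ℝ φ x) :
    IsPHWCAt φ x ↔ ∀ A B, ∑ i, fderiv ℝ (fun y => φ y A) x (stdOrthonormalBasis ℝ E i) *
      fderiv ℝ (fun y => φ y B) x (stdOrthonormalBasis ℝ E i) = 0 := by
  have hcoord (A : κ) (e : E) : fderiv ℝ φ x e A = fderiv ℝ (fun y => φ y A) x e :=
    DFunLike.congr_fun (hasFDerivAt_pi'.1 hφ.hasFDerivAt A).fderiv.symm e
  simp only [IsPHWCAt, sum_bilin_self_eq_zero_iff, hcoord]

lemma phwcOn_iff {n : ℕ} {φ : E → Fin n → ℂ} {W : Set E}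
    (hφ : ∀ x ∈ W, DifferentiableAt ℝ φ x) : PHWCOn φ W ↔ ∀ x ∈ W, IsPHWCAt φ x := by
  have hcomp : ∀ A, ∀ x ∈ W, DifferentiableAt ℝ (fun y => φ y A) x :=
    fun A x hx => differentiableAt_pi.1 (hφ x hx) A
  constructor
  · intro h x hx
    exact (isPHWCAt_pi_iff (hφ x hx)).2 fun A B =>
      (sum_fderiv_mul_fderiv_eq_zero_iff (hcomp A x hx) (hcomp B x hx) _).2 (h A B x hx)
  · intro h A B x hx
    exact (sum_fderiv_mul_fderiv_eq_zero_iff (hcomp A x hx) (hcomp B x hx) _).1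
      ((isPHWCAt_pi_iff (hφ x hx)).1 (h x hx) A B)

theorem phmOn_iff {n : ℕ} {φ : E → Fin n → ℂ} {W : Set E} (hW : IsOpen W) :
    PHMOn φ W ↔ ContDiffOn ℝ 2 φ W ∧ ∀ x ∈ W, Δ φ x = 0 ∧ IsPHWCAt φ x := by
  refine and_congr_right fun hφ => ?_
  have hφx : ∀ x ∈ W, ContDiffAt ℝ 2 φ x := fun x hx => hφ.contDiffAt (hW.mem_nhds hx)
  rw [phwcOn_iff fun x hx => (hφx x hx).differentiableAt two_ne_zero, forall₂_and]
  refine and_congr_left fun _ => ?_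
  calc (∀ A, HarmonicOn (fun y => (φ y A).re) W ∧ HarmonicOn (fun y => (φ y A).im) W)
      ↔ ∀ A, ∀ x ∈ W, Δ (fun y => φ y A) x = 0 :=
        forall_congr' fun A => harmonicOn_re_and_harmonicOn_im_iff hW (contDiffOn_pi.1 hφ A)
    _ ↔ ∀ x ∈ W, ∀ A, Δ (fun y => φ y A) x = 0 := by tauto
    _ ↔ ∀ x ∈ W, Δ φ x = 0 := forall₂_congr fun x hx => by
        simp only [← laplacian_apply (hφx x hx), funext_iff, Pi.zero_apply]

lemma IsPHWCAt.comp {φ : E → F} {ψ : F → G} {x : E} (h : IsPHWCAt φ x)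
    (hψ : DifferentiableAt ℂ ψ (φ x)) (hφ : DifferentiableAt ℝ φ x) :
    IsPHWCAt (fun y => ψ (φ y)) x := by
  have hfderiv : fderiv ℝ (fun y => ψ (φ y)) x =
      ((fderiv ℂ ψ (φ x)).restrictScalars ℝ).comp (fderiv ℝ φ x) :=
    ((hψ.hasFDerivAt.restrictScalars ℝ).comp x hφ.hasFDerivAt).fderiv
  intro L
  rw [hfderiv]
  exact h (L.bilinearComp (fderiv ℂ ψ (φ x)) (fderiv ℂ ψ (φ x)))

lemma IsPHWCAt.laplacian_comp {φ : E → F} {ψ : F → G} {x : E} (h : IsPHWCAt φ x)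
    (hψ : ContDiffAt ℂ 2 ψ (φ x)) (hφ : ContDiffAt ℝ 2 φ x) :
    Δ (fun y => ψ (φ y)) x = fderiv ℂ ψ (φ x) (Δ φ x) := by
  rw [laplacian_comp_eq_sum_add (stdOrthonormalBasis ℝ E) hψ hφ, add_eq_right]
  refine SeparatingDual.eq_zero_of_forall_dual_eq_zero (R := ℂ) fun l => ?_
  rw [map_sum]
  exact h ((ContinuousLinearMap.compL ℂ F G ℂ l).comp (fderiv ℂ (fderiv ℂ ψ) (φ x)))

lemma isPHWCAt_of_forall_laplacian_bilin_eq_zero {φ : E → F} {x : E}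
    (hφ : ContDiffAt ℝ 2 φ x) (hlap : Δ φ x = 0)
    (hbilin : ∀ L : F →L[ℂ] F →L[ℂ] ℂ, Δ (fun y => L (φ y) (φ y)) x = 0) :
    IsPHWCAt φ x := by
  intro L
  have hL : ContDiffAt ℂ 2 (fun z => L z z) (φ x) := by fun_prop
  have htrace := hbilin L
  rw [laplacian_comp_eq_sum_add (stdOrthonormalBasis ℝ E) hL hφ, hlap, map_zero, add_zero,
    fderiv_fderiv_bilin_self] at htrace
  simpa [← two_mul, ← Finset.mul_sum] using htrace

end Conformality

section Composition

variable {E : Type*} [NormedAddCommGroup E] [InnerProductSpace ℝ E] [FiniteDimensional ℝ E]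
  {n : ℕ} {φ : E → Fin n → ℂ} {U : Set E}

theorem PHMOn.comp_differentiableOn (h : PHMOn φ U) (hU : IsOpen U) {m : ℕ}
    {V : Set (Fin n → ℂ)} (hV : IsOpen V) {ψ : (Fin n → ℂ) → Fin m → ℂ}
    (hψ : DifferentiableOn ℂ ψ V) :
    PHMOn (fun y => ψ (φ y)) (U ∩ φ ⁻¹' V) := by
  obtain ⟨hφ, hphm⟩ := (phmOn_iff hU).1 h
  have hψ2 : ContDiffOn ℂ 2 ψ V := contDiffOn_of_differentiableOn_complex hV 2 hψ
  refine (phmOn_iff (hφ.continuousOn.isOpen_inter_preimage hU hV)).2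
    ⟨(hψ2.restrict_scalars ℝ).comp (hφ.mono Set.inter_subset_left) fun _ hx => hx.2, ?_⟩
  rintro x ⟨hxU, hxV⟩
  obtain ⟨hlap, hconf⟩ := hphm x hxU
  have hφx : ContDiffAt ℝ 2 φ x := hφ.contDiffAt (hU.mem_nhds hxU)
  have hψx : ContDiffAt ℂ 2 ψ (φ x) := hψ2.contDiffAt (hV.mem_nhds hxV)
  refine ⟨?_, hconf.comp (hψx.differentiableAt two_ne_zero) (hφx.differentiableAt two_ne_zero)⟩
  rw [hconf.laplacian_comp hψx hφx, hlap, map_zero]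

theorem phmOn_of_forall_comp_entire (hU : IsOpen U)
    (h : ∀ g : (Fin n → ℂ) → ℂ, Differentiable ℂ g → ContDiffOn ℝ 2 (fun y => g (φ y)) U ∧
      ∀ x ∈ U, Δ (fun y => g (φ y)) x = 0) :
    PHMOn φ U := by
  have hφ : ContDiffOn ℝ 2 φ U :=
    contDiffOn_pi.2 fun A => (h (fun z => z A) (by fun_prop)).1
  refine (phmOn_iff hU).2 ⟨hφ, fun x hx => ?_⟩
  have hφx : ContDiffAt ℝ 2 φ x := hφ.contDiffAt (hU.mem_nhds hx)
  have hlap : Δ φ x = 0 := by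
    ext A
    exact (laplacian_apply hφx A).trans ((h (fun z => z A) (by fun_prop)).2 x hx)
  exact ⟨hlap, isPHWCAt_of_forall_laplacian_bilin_eq_zero hφx hlap fun L =>
    (h (fun z => L z z) (by fun_prop)).2 x hx⟩

theorem PHMOn.contDiffOn_and_laplacian_apply_eq_zero (hU : IsOpen U) (h : PHMOn φ U) (A : Fin n) :
    ContDiffOn ℝ 2 (fun y => φ y A) U ∧ ∀ x ∈ U, Δ (fun y => φ y A) x = 0 :=
  have hA := contDiffOn_pi.1 h.1 A
  ⟨hA, (harmonicOn_re_and_harmonicOn_im_iff hU hA).1 (h.2.1 A)⟩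

end Composition

theorem phm_iff_comp_holom_map_phm_general {E : Type*} [NormedAddCommGroup E]
    [InnerProductSpace ℝ E] [FiniteDimensional ℝ E] {n : ℕ} {U : Set E} (hU : IsOpen U)
    {p : ℕ} (hp : 1 ≤ p) {φ : E → (Fin n → ℂ)} :
    PHMOn φ U ↔
    ∀ V : Set (Fin n → ℂ), IsOpen V → ∀ ψ : (Fin n → ℂ) → (Fin p → ℂ),
      DifferentiableOn ℂ ψ V → PHMOn (fun y => ψ (φ y)) (U ∩ φ ⁻¹' V) := by
  refine ⟨fun h V hV ψ hψ => h.comp_differentiableOn hU hV hψ, fun h => ?_⟩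
  refine phmOn_of_forall_comp_entire hU fun g hg => ?_
  have hconst : PHMOn (fun y (_ : Fin p) => g (φ y)) U := by
    simpa using h Set.univ isOpen_univ (fun z _ => g z) (by fun_prop)
  exact hconst.contDiffOn_and_laplacian_apply_eq_zero hU ⟨0, hp⟩

/-- A `C²` map `φ : U → ℂⁿ` is a pseudo harmonic morphism if and only if, for every open
set `V ⊆ ℂⁿ` and every holomorphic map `ψ : V → ℂᵖ`, the composition `ψ ∘ φ` is a
pseudo harmonic morphism on `φ⁻¹(V)`. -/
theorem phm_iff_comp_holom_map_phm {E : Type*} [NormedAddCommGroup E]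
    [InnerProductSpace ℝ E] [FiniteDimensional ℝ E] {n : ℕ}
    (U : Set E) (hU : IsOpen U) (hUne : U.Nonempty)
    (p : ℕ) (hp : 1 ≤ p)
    (φ : E → (Fin n → ℂ)) (hφ : ContDiffOn ℝ 2 φ U) :
    PHMOn φ U ↔
    ∀ V : Set (Fin n → ℂ), IsOpen V → ∀ ψ : (Fin n → ℂ) → (Fin p → ℂ),
      DifferentiableOn ℂ ψ V → PHMOn (fun y => ψ (φ y)) (U ∩ φ ⁻¹' V) :=
  phm_iff_comp_holom_map_phm_general hU hp
end

section
/- Let E be a finite-dimensional real inner product space, U ⊆ E a nonempty open set, and φ : U → ℂⁿ a C² map with components φ^k (k = 1,…,n). Suppose that for every k ∈ {1,…,n} the real and imaginary parts of φ^k are harmonic on U, and that for every A, B ∈ {1,…,n} the real and imaginary parts of the product φ^A·φ^B are harmonic on U. Then φ is a pseudo harmonic morphism, i.e. φ is harmonic and pseudo-horizontally weakly conformal. -/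
/-!
For complex-valued functions the Laplacian satisfies `Δ(fg) = f Δg + g Δf + 2⟨∇f, ∇g⟩`, where
`⟨·, ·⟩` is the complex *bilinear* extension of the inner product. When `φᴬ`, `φᴮ` and `φᴬφᴮ` are
all harmonic this leaves `⟨∇φᴬ, ∇φᴮ⟩ = 0`, whose real and imaginary parts are the two equations of
pseudo-horizontal weak conformality.
-/

open scoped RealInnerProductSpace

open scoped ComplexConjugate Gradient Topology

section Gradient

variable {𝕜 E : Type*} [RCLike 𝕜] [NormedAddCommGroup E] [InnerProductSpace 𝕜 E] [CompleteSpace E]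
  {f g : E → 𝕜} {x : E}

lemma gradient_fun_add (hf : DifferentiableAt 𝕜 f x) (hg : DifferentiableAt 𝕜 g x) :
    ∇ (fun y => f y + g y) x = ∇ f x + ∇ g x := by
  simp only [gradient, fderiv_fun_add hf hg, map_add]

lemma gradient_fun_sub (hf : DifferentiableAt 𝕜 f x) (hg : DifferentiableAt 𝕜 g x) :
    ∇ (fun y => f y - g y) x = ∇ f x - ∇ g x := by
  simp only [gradient, fderiv_fun_sub hf hg, map_sub]

lemma gradient_fun_mul (hf : DifferentiableAt 𝕜 f x) (hg : DifferentiableAt 𝕜 g x) :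
    ∇ (fun y => f y * g y) x = conj (f x) • ∇ g x + conj (g x) • ∇ f x := by
  simp only [gradient, fderiv_fun_mul hf hg, map_add, map_smulₛₗ]

end Gradient

lemma eventually_differentiableAt_of_contDiffAt {𝕜 E F : Type*} [NontriviallyNormedField 𝕜]
    [NormedAddCommGroup E] [NormedSpace 𝕜 E] [NormedAddCommGroup F] [NormedSpace 𝕜 F]
    {f : E → F} {x : E} {n : WithTop ℕ∞} (hf : ContDiffAt 𝕜 n f x) (hn : n ≠ 0) :
    ∀ᶠ y in 𝓝 x, DifferentiableAt 𝕜 f y :=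
  ((hf.of_le (ENat.one_le_iff_ne_zero_withTop.2 hn)).eventually (by simp)).mono
    fun _ hy => hy.differentiableAt one_ne_zero

section Laplacian

variable {E : Type*} [NormedAddCommGroup E] [InnerProductSpace ℝ E] [CompleteSpace E]
  {f g : E → ℝ} {x : E}

lemma differentiableAt_gradient (hf : ContDiffAt ℝ 2 f x) : DifferentiableAt ℝ (∇ f) x :=
  (InnerProductSpace.toDual ℝ E).symm.toContinuousLinearEquiv.differentiableAt.comp x
    ((hf.fderiv_right (m := 1) (by norm_num)).differentiableAt one_ne_zero)

lemma fderiv_gradient_fun_mul (hf : ContDiffAt ℝ 2 f x) (hg : ContDiffAt ℝ 2 g x) :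
    fderiv ℝ (∇ (fun y => f y * g y)) x =
      f x • fderiv ℝ (∇ g) x + (fderiv ℝ f x).smulRight (∇ g x) +
        (g x • fderiv ℝ (∇ f) x + (fderiv ℝ g x).smulRight (∇ f x)) := by
  have gradient_mul : ∇ (fun y => f y * g y) =ᶠ[𝓝 x] fun y => f y • ∇ g y + g y • ∇ f y := by
    filter_upwards [eventually_differentiableAt_of_contDiffAt hf two_ne_zero,
      eventually_differentiableAt_of_contDiffAt hg two_ne_zero] with y hfy hgy
    exact gradient_fun_mul hfy hgy
  have hf_diff : DifferentiableAt ℝ f x := hf.differentiableAt two_ne_zero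
  have hg_diff : DifferentiableAt ℝ g x := hg.differentiableAt two_ne_zero
  have hf_grad := differentiableAt_gradient hf
  have hg_grad := differentiableAt_gradient hg
  rw [gradient_mul.fderiv_eq, fderiv_fun_add (hf_diff.fun_smul hg_grad) (hg_diff.fun_smul hf_grad),
    fderiv_fun_smul hf_diff hg_grad, fderiv_fun_smul hg_diff hf_grad]

lemma lap_add (hf : ContDiffAt ℝ 2 f x) (hg : ContDiffAt ℝ 2 g x) :
    lap (fun y => f y + g y) x = lap f x + lap g x := by
  have gradient_add : ∇ (fun y => f y + g y) =ᶠ[𝓝 x] fun y => ∇ f y + ∇ g y := by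
    filter_upwards [eventually_differentiableAt_of_contDiffAt hf two_ne_zero,
      eventually_differentiableAt_of_contDiffAt hg two_ne_zero] with y hfy hgy
    exact gradient_fun_add hfy hgy
  rw [lap, gradient_add.fderiv_eq,
    fderiv_fun_add (differentiableAt_gradient hf) (differentiableAt_gradient hg),
    ContinuousLinearMap.toLinearMap_add, map_add, lap, lap]

lemma lap_sub (hf : ContDiffAt ℝ 2 f x) (hg : ContDiffAt ℝ 2 g x) :
    lap (fun y => f y - g y) x = lap f x - lap g x := by
  have gradient_sub : ∇ (fun y => f y - g y) =ᶠ[𝓝 x] fun y => ∇ f y - ∇ g y := by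
    filter_upwards [eventually_differentiableAt_of_contDiffAt hf two_ne_zero,
      eventually_differentiableAt_of_contDiffAt hg two_ne_zero] with y hfy hgy
    exact gradient_fun_sub hfy hgy
  rw [lap, gradient_sub.fderiv_eq,
    fderiv_fun_sub (differentiableAt_gradient hf) (differentiableAt_gradient hg),
    ContinuousLinearMap.toLinearMap_sub, map_sub, lap, lap]

lemma lap_mul [FiniteDimensional ℝ E] (hf : ContDiffAt ℝ 2 f x) (hg : ContDiffAt ℝ 2 g x) :
    lap (fun y => f y * g y) x = f x * lap g x + g x * lap f x + 2 * ⟪∇ f x, ∇ g x⟫ := by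
  have trace_fderiv_smulRight (h : E → ℝ) (v : E) :
      LinearMap.trace ℝ E ((fderiv ℝ h x).smulRight v : E →L[ℝ] E) = ⟪∇ h x, v⟫ :=
    (LinearMap.trace_smulRight (fderiv ℝ h x : E →ₗ[ℝ] ℝ) v).trans inner_gradient_left.symm
  simp only [lap, fderiv_gradient_fun_mul hf hg, ContinuousLinearMap.toLinearMap_add,
    ContinuousLinearMap.toLinearMap_smul, map_add, map_smul, trace_fderiv_smulRight, smul_eq_mul,
    real_inner_comm (∇ f x) (∇ g x)]
  ring

end Laplacian

section ComplexValued

variable {E : Type*} [NormedAddCommGroup E] [InnerProductSpace ℝ E] [CompleteSpace E]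

/-- The Laplacian of a complex-valued function, taken separately on real and imaginary parts. -/
noncomputable def complexLap (f : E → ℂ) (x : E) : ℂ :=
  ⟨lap (fun y => (f y).re) x, lap (fun y => (f y).im) x⟩

/-- The pairing `⟨∇f, ∇g⟩` of the gradients of two complex-valued functions, where `⟨·, ·⟩` is the
complex bilinear (not sesquilinear) extension of the inner product of `E` and
`∇f = ∇(re f) + i ∇(im f)`. -/
noncomputable def gradientPairing (f g : E → ℂ) (x : E) : ℂ :=
  ⟨⟪∇ (fun y => (f y).re) x, ∇ (fun y => (g y).re) x⟫ -
      ⟪∇ (fun y => (f y).im) x, ∇ (fun y => (g y).im) x⟫,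
    ⟪∇ (fun y => (f y).im) x, ∇ (fun y => (g y).re) x⟫ +
      ⟪∇ (fun y => (f y).re) x, ∇ (fun y => (g y).im) x⟫⟩

lemma complexLap_mul [FiniteDimensional ℝ E] {f g : E → ℂ} {x : E}
    (hf : ContDiffAt ℝ 2 f x) (hg : ContDiffAt ℝ 2 g x) :
    complexLap (fun y => f y * g y) x =
      f x * complexLap g x + g x * complexLap f x + 2 * gradientPairing f g x := by
  have contDiffAt_re {h : E → ℂ} (hh : ContDiffAt ℝ 2 h x) :
      ContDiffAt ℝ 2 (fun y => (h y).re) x := Complex.reCLM.contDiff.contDiffAt.comp x hh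
  have contDiffAt_im {h : E → ℂ} (hh : ContDiffAt ℝ 2 h x) :
      ContDiffAt ℝ 2 (fun y => (h y).im) x := Complex.imCLM.contDiff.contDiffAt.comp x hh
  have hf_re := contDiffAt_re hf
  have hf_im := contDiffAt_im hf
  have hg_re := contDiffAt_re hg
  have hg_im := contDiffAt_im hg
  apply Complex.ext
  · simp only [complexLap, gradientPairing, Complex.mul_re, Complex.add_re, Complex.re_ofNat,
      Complex.im_ofNat, lap_sub (hf_re.mul hg_re) (hf_im.mul hg_im), lap_mul hf_re hg_re,
      lap_mul hf_im hg_im]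
    ring
  · simp only [complexLap, gradientPairing, Complex.mul_im, Complex.add_im, Complex.re_ofNat,
      Complex.im_ofNat, lap_add (hf_re.mul hg_im) (hf_im.mul hg_re), lap_mul hf_re hg_im,
      lap_mul hf_im hg_re]
    ring

lemma complexLap_eq_zero_of_harmonicOn {f : E → ℂ} {W : Set E} {x : E}
    (hf : HarmonicOn (fun y => (f y).re) W ∧ HarmonicOn (fun y => (f y).im) W) (hx : x ∈ W) :
    complexLap f x = 0 :=
  Complex.ext (hf.1.2 x hx) (hf.2.2 x hx)

lemma phwcOn_iff_gradientPairing_eq_zero {n : ℕ} {φ : E → Fin n → ℂ} {U : Set E} :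
    PHWCOn φ U ↔
      ∀ A B : Fin n, ∀ x ∈ U, gradientPairing (fun y => φ y A) (fun y => φ y B) x = 0 := by
  simp only [PHWCOn, gradientPairing, Complex.ext_iff, Complex.zero_re, Complex.zero_im]

end ComplexValued

/-- If the real and imaginary parts of all components `φᵏ` of a `C²` map `φ : U → ℂⁿ`
are harmonic, and the real and imaginary parts of all products `φᴬ·φᴮ` are harmonic, then
`φ` is a pseudo harmonic morphism: harmonic and pseudo-horizontally weakly conformal. -/
theorem phm_of_harmonic_components_and_products {E : Type*} [NormedAddCommGroup E]
    [InnerProductSpace ℝ E] [FiniteDimensional ℝ E] {n : ℕ}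
    (U : Set E) (hU : IsOpen U) (hUne : U.Nonempty)
    (φ : E → (Fin n → ℂ)) (hφ : ContDiffOn ℝ 2 φ U)
    (hcomp : ∀ k : Fin n,
      HarmonicOn (fun y => (φ y k).re) U ∧ HarmonicOn (fun y => (φ y k).im) U)
    (hprod : ∀ A B : Fin n,
      HarmonicOn (fun y => (φ y A * φ y B).re) U ∧
      HarmonicOn (fun y => (φ y A * φ y B).im) U) :
    PHMOn φ U := by
  refine ⟨hφ, hcomp, phwcOn_iff_gradientPairing_eq_zero.2 fun A B x hx => ?_⟩
  have contDiffAt_component (k : Fin n) : ContDiffAt ℝ 2 (fun y => φ y k) x :=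
    contDiffAt_pi.1 (hφ.contDiffAt (hU.mem_nhds hx)) k
  have product_rule := complexLap_mul (contDiffAt_component A) (contDiffAt_component B)
  rw [complexLap_eq_zero_of_harmonicOn (hprod A B) hx,
    complexLap_eq_zero_of_harmonicOn (hcomp A) hx,
    complexLap_eq_zero_of_harmonicOn (hcomp B) hx] at product_rule
  simpa using product_rule.symm
end
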